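/- arXiv:2510.22342 — 4 statements merged into one kernel-verified Lean document; each statement's English description precedes it below -/
import Mathlib

section
/- Let n ≥ 1, let f : ℝⁿ → ℝ, and let xᴸ, xᵁ ∈ ℝⁿ be bounds with xᵁᵢ − xᴸᵢ = δ for every coordinate i, where δ > 0. Let α ≥ 0 and λ_min ∈ ℝ satisfy α ≤ |λ_min|/2, and define the αBB underestimator L(x) = f(x) + α Σᵢ (xᴸᵢ − xᵢ)(xᵁᵢ − xᵢ). Suppose f is Lipschitz continuous with constant L_f on the box [xᴸ, xᵁ], i.e. |f(x) − f(y)| ≤ L_f‖x − y‖₂ for all x, y in the box. Then for any two points x_t, x_k in the box with ‖x_t − x_k‖₂ ≤ (√n/2)·δ, one has |L(x_t) − f(x_k)| ≤ (L_f/2)·√n·δ + (|λ_min|/8)·n·δ². -/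
/-!
By the triangle inequality, `|L xt - f xk| ≤ |f xt - f xk| + α |∑ i, (xLᵢ - xtᵢ)(xUᵢ - xtᵢ)|`.
The first term is controlled by the Lipschitz bound. In the second, each summand lies in
`[-δ²/4, 0]`, a product of two nonnegative numbers with sum `δ` being at most `δ²/4`;
with `α ≤ |lammin|/2` this gives `|lammin|/8 * n * δ²`.
-/

/-- **Function value bound for the αBB underestimator (Theorem 1, part 1).**
If every side of the box `[xL, xU]` has width `δ > 0`, `0 ≤ α ≤ |λmin|/2`,
`f` is `Lf`-Lipschitz on the box, and `xt, xk` lie in the box with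
`‖xt - xk‖ ≤ (√n/2)·δ`, then the αBB underestimator
`L(x) = f(x) + α ∑ i (xLᵢ - xᵢ)(xUᵢ - xᵢ)` satisfies
`|L(xt) - f(xk)| ≤ (Lf/2)√n δ + (|λmin|/8) n δ²`. -/
theorem abb_function_value_bound (n : ℕ) (hn : 1 ≤ n)
    (f : EuclideanSpace ℝ (Fin n) → ℝ)
    (xL xU : EuclideanSpace ℝ (Fin n)) (δ : ℝ) (hδ : 0 < δ)
    (hwidth : ∀ i, xU i - xL i = δ)
    (α lammin : ℝ) (hα0 : 0 ≤ α) (hαle : α ≤ |lammin| / 2)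
    (Lf : ℝ)
    (hLip : ∀ x y : EuclideanSpace ℝ (Fin n),
      (∀ i, xL i ≤ x i ∧ x i ≤ xU i) → (∀ i, xL i ≤ y i ∧ y i ≤ xU i) →
      |f x - f y| ≤ Lf * ‖x - y‖)
    (L : EuclideanSpace ℝ (Fin n) → ℝ)
    (hL : L = fun x => f x + α * ∑ i, (xL i - x i) * (xU i - x i))
    (xt xk : EuclideanSpace ℝ (Fin n))
    (hxt : ∀ i, xL i ≤ xt i ∧ xt i ≤ xU i)
    (hxk : ∀ i, xL i ≤ xk i ∧ xk i ≤ xU i)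
    (hdist : ‖xt - xk‖ ≤ (Real.sqrt n / 2) * δ) :
    |L xt - f xk| ≤ Lf / 2 * Real.sqrt n * δ + |lammin| / 8 * n * δ ^ 2 := by
  -- The sign of `Lf` is not assumed: it follows from the Lipschitz bound at the two opposite
  -- corners of the box, which are distinct because `1 ≤ n` and `0 < δ`.
  have hLf : 0 ≤ Lf := by
    have hle : ∀ i, xL i ≤ xU i := fun i => by linarith [hwidth i]
    have h := hLip xU xL (fun i => ⟨hle i, le_rfl⟩) (fun i => ⟨le_rfl, hle i⟩)
    have hne : xU - xL ≠ 0 := by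
      intro h0
      have h1 : (xU - xL) ⟨0, hn⟩ = 0 := by rw [h0]; rfl
      have h2 : xU ⟨0, hn⟩ - xL ⟨0, hn⟩ = 0 := h1
      linarith [hwidth ⟨0, hn⟩]
    exact nonneg_of_mul_nonneg_left ((abs_nonneg _).trans h) (norm_pos_iff.mpr hne)
  have hf : |f xt - f xk| ≤ Lf * ((Real.sqrt n / 2) * δ) :=
    (hLip xt xk hxt hxk).trans (mul_le_mul_of_nonneg_left hdist hLf)
  have hsum : |∑ i, (xL i - xt i) * (xU i - xt i)| ≤ n * (δ ^ 2 / 4) := by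
    calc |∑ i, (xL i - xt i) * (xU i - xt i)|
        ≤ ∑ i, |(xL i - xt i) * (xU i - xt i)| := Finset.abs_sum_le_sum_abs _ _
      _ ≤ ∑ _i : Fin n, δ ^ 2 / 4 := by
          refine Finset.sum_le_sum fun i _ => ?_
          obtain ⟨h1, h2⟩ := hxt i
          rw [← hwidth i, abs_le]
          constructor
          · nlinarith [sq_nonneg (xL i + xU i - 2 * xt i)]
          · nlinarith [mul_nonneg (sub_nonneg.mpr h1) (sub_nonneg.mpr h2),
              sq_nonneg (xU i - xL i)]
      _ = n * (δ ^ 2 / 4) := by simp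
  have hq : |α * ∑ i, (xL i - xt i) * (xU i - xt i)| ≤ |lammin| / 2 * (n * (δ ^ 2 / 4)) := by
    rw [abs_mul, abs_of_nonneg hα0]
    exact mul_le_mul hαle hsum (abs_nonneg _) (by positivity)
  subst hL
  calc |f xt + α * ∑ i, (xL i - xt i) * (xU i - xt i) - f xk|
      = |(f xt - f xk) + α * ∑ i, (xL i - xt i) * (xU i - xt i)| := by
        congr 1; ring
    _ ≤ |f xt - f xk| + |α * ∑ i, (xL i - xt i) * (xU i - xt i)| := abs_add_le _ _
    _ ≤ Lf * ((Real.sqrt n / 2) * δ) + |lammin| / 2 * (n * (δ ^ 2 / 4)) := add_le_add hf hq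
    _ = Lf / 2 * Real.sqrt n * δ + |lammin| / 8 * n * δ ^ 2 := by ring
end

section
/- Let n ≥ 1, let f : ℝⁿ → ℝ be differentiable, and let xᴸ, xᵁ ∈ ℝⁿ be bounds with xᵁᵢ − xᴸᵢ = δ for every coordinate i, where δ > 0. Let α ≥ 0 and λ_min ∈ ℝ satisfy α ≤ |λ_min|/2, and define L(x) = f(x) + α Σᵢ (xᴸᵢ − xᵢ)(xᵁᵢ − xᵢ), whose gradient is ∇L(x) = ∇f(x) + α(2x − xᴸ − xᵁ). Suppose ∇f is Lipschitz continuous with constant L_g on the box [xᴸ, xᵁ], i.e. ‖∇f(x) − ∇f(y)‖₂ ≤ L_g‖x − y‖₂ for all x, y in the box. Then for any x_t, x_k in the box with ‖x_t − x_k‖₂ ≤ (√n/2)·δ, one has ‖∇L(x_t) − ∇f(x_k)‖₂ ≤ (L_g/2)·√n·δ + (|λ_min|/2)·√n·δ. -/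
/-!
The quadratic term of the underestimator is the inner product `⟪xL - x, xU - x⟫`, so the product
rule gives its gradient `2x - xL - xU`. For `x` in the box each coordinate of this vector is the
difference of `xᵢ - xLᵢ` and `xUᵢ - xᵢ`, two nonnegative numbers with sum `δ`, hence its norm is
at most `√n δ`. The bound then follows from the triangle inequality
`‖∇L(xt) - ∇f(xk)‖ ≤ ‖∇f(xt) - ∇f(xk)‖ + α ‖2xt - xL - xU‖`. The Lipschitz constant is
nonnegative because the box contains two distinct points.
-/

open scoped InnerProductSpace in
lemma hasGradientAt_abb_quadratic {n : ℕ} (xL xU x : EuclideanSpace ℝ (Fin n)) :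
    HasGradientAt (fun x : EuclideanSpace ℝ (Fin n) => ∑ i, (xL i - x i) * (xU i - x i))
      (2 • x - xL - xU) x := by
  have hq : (fun x : EuclideanSpace ℝ (Fin n) => ∑ i, (xL i - x i) * (xU i - x i))
      = fun x => ⟪xL - x, xU - x⟫_ℝ := by
    funext y
    simp [PiLp.inner_apply, mul_comm]
  rw [hq, hasGradientAt_iff_hasFDerivAt]
  have hl : HasFDerivAt (fun y => xL - y) (-ContinuousLinearMap.id ℝ _) x :=
    (hasFDerivAt_id x).const_sub xL
  have hu : HasFDerivAt (fun y => xU - y) (-ContinuousLinearMap.id ℝ _) x :=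
    (hasFDerivAt_id x).const_sub xU
  refine (hl.inner ℝ hu).congr_fderiv ?_
  ext v
  simp only [ContinuousLinearMap.comp_apply, ContinuousLinearMap.prod_apply,
    neg_apply, ContinuousLinearMap.id_apply, fderivInnerCLM_apply,
    InnerProductSpace.toDual_apply_apply, inner_sub_left, inner_neg_left, inner_neg_right,
    inner_sub_right, two_smul, inner_add_left]
  rw [real_inner_comm xU v, real_inner_comm x v]
  ring

lemma norm_two_smul_sub_sub_le {n : ℕ} {xL xU x : EuclideanSpace ℝ (Fin n)} {δ : ℝ} (hδ : 0 ≤ δ)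
    (hwidth : ∀ i, xU i - xL i = δ) (hx : ∀ i, xL i ≤ x i ∧ x i ≤ xU i) :
    ‖2 • x - xL - xU‖ ≤ Real.sqrt n * δ := by
  rw [EuclideanSpace.norm_eq]
  refine Real.sqrt_le_iff.mpr ⟨by positivity, ?_⟩
  calc ∑ i, ‖(2 • x - xL - xU) i‖ ^ 2 ≤ ∑ _i : Fin n, δ ^ 2 := by
        refine Finset.sum_le_sum fun i _ => ?_
        have hi : ‖(2 • x - xL - xU) i‖ ≤ δ := by
          have := hwidth i
          have := hx i
          simp only [two_smul, PiLp.sub_apply, PiLp.add_apply, Real.norm_eq_abs]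
          exact abs_le.mpr ⟨by linarith, by linarith⟩
        gcongr
    _ = (Real.sqrt n * δ) ^ 2 := by
        rw [mul_pow, Real.sq_sqrt (Nat.cast_nonneg n)]
        simp

/-- **Gradient bound for the αBB underestimator (Theorem 1, part 2).**
If every side of the box `[xL, xU]` has width `δ > 0`, `0 ≤ α ≤ |λmin|/2`,
`f` is differentiable with `∇f` being `Lg`-Lipschitz on the box, and
`xt, xk` lie in the box with `‖xt - xk‖ ≤ (√n/2)·δ`, then the gradient of the
αBB underestimator `L(x) = f(x) + α ∑ i (xLᵢ - xᵢ)(xUᵢ - xᵢ)`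
(namely `∇L(x) = ∇f(x) + α(2x - xL - xU)`) satisfies
`‖∇L(xt) - ∇f(xk)‖ ≤ (Lg/2)√n δ + (|λmin|/2)√n δ`. -/
theorem abb_gradient_bound (n : ℕ) (hn : 1 ≤ n)
    (f : EuclideanSpace ℝ (Fin n) → ℝ) (hf : Differentiable ℝ f)
    (xL xU : EuclideanSpace ℝ (Fin n)) (δ : ℝ) (hδ : 0 < δ)
    (hwidth : ∀ i, xU i - xL i = δ)
    (α lammin : ℝ) (hα0 : 0 ≤ α) (hαle : α ≤ |lammin| / 2)
    (Lg : ℝ)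
    (hLip : ∀ x y : EuclideanSpace ℝ (Fin n),
      (∀ i, xL i ≤ x i ∧ x i ≤ xU i) → (∀ i, xL i ≤ y i ∧ y i ≤ xU i) →
      ‖gradient f x - gradient f y‖ ≤ Lg * ‖x - y‖)
    (L : EuclideanSpace ℝ (Fin n) → ℝ)
    (hL : L = fun x => f x + α * ∑ i, (xL i - x i) * (xU i - x i))
    (xt xk : EuclideanSpace ℝ (Fin n))
    (hxt : ∀ i, xL i ≤ xt i ∧ xt i ≤ xU i)
    (hxk : ∀ i, xL i ≤ xk i ∧ xk i ≤ xU i)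
    (hdist : ‖xt - xk‖ ≤ (Real.sqrt n / 2) * δ) :
    gradient L xt = gradient f xt + α • (2 • xt - xL - xU) ∧
    ‖gradient L xt - gradient f xk‖
      ≤ Lg / 2 * Real.sqrt n * δ + |lammin| / 2 * Real.sqrt n * δ := by
  have hgrad : gradient L xt = gradient f xt + α • (2 • xt - xL - xU) := by
    have h1 := (hf xt).hasGradientAt.hasFDerivAt
    have h2 := (hasGradientAt_abb_quadratic xL xU xt).hasFDerivAt
    refine HasGradientAt.gradient ?_
    rw [hL, hasGradientAt_iff_hasFDerivAt]
    refine (h1.add (h2.const_mul α)).congr_fderiv ?_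
    simp only [map_add, map_smul]
  refine ⟨hgrad, ?_⟩
  -- The opposite corners `xL` and `xU` are distinct, which forces `Lg ≥ 0`.
  have hLg : 0 ≤ Lg := by
    have hle : ∀ i, xL i ≤ xU i := fun i => by linarith [hwidth i]
    have hne : xL - xU ≠ 0 := fun h => by
      have h0 := hwidth ⟨0, hn⟩
      rw [sub_eq_zero.mp h] at h0
      linarith
    have h := hLip xL xU (fun i => ⟨le_rfl, hle i⟩) (fun i => ⟨hle i, le_rfl⟩)
    exact nonneg_of_mul_nonneg_left ((norm_nonneg _).trans h) (norm_pos_iff.mpr hne)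
  calc ‖gradient L xt - gradient f xk‖
      = ‖(gradient f xt - gradient f xk) + α • (2 • xt - xL - xU)‖ := by
        rw [hgrad, add_sub_right_comm]
    _ ≤ ‖gradient f xt - gradient f xk‖ + α * ‖2 • xt - xL - xU‖ := by
        refine (norm_add_le _ _).trans_eq ?_
        rw [norm_smul, Real.norm_of_nonneg hα0]
    _ ≤ Lg * (Real.sqrt n / 2 * δ) + |lammin| / 2 * (Real.sqrt n * δ) := by
        have h1 := (hLip xt xk hxt hxk).trans (mul_le_mul_of_nonneg_left hdist hLg)
        have h2 := norm_two_smul_sub_sub_le hδ.le hwidth hxt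
        gcongr
    _ = Lg / 2 * Real.sqrt n * δ + |lammin| / 2 * Real.sqrt n * δ := by ring
end

section
/- Let n ≥ 1, let f : ℝⁿ → ℝ be twice continuously differentiable, let xᴸ, xᵁ ∈ ℝⁿ with xᴸᵢ ≤ xᵁᵢ for all i, and let α ≥ 0 satisfy α ≥ −(1/2)·λ_min(∇²f(x)) for every x in the box [xᴸ, xᵁ], where λ_min(∇²f(x)) denotes the smallest eigenvalue of the Hessian matrix of f at x. Then the αBB underestimator L(x) = f(x) + α Σᵢ₌₁ⁿ (xᴸᵢ − xᵢ)(xᵁᵢ − xᵢ) is convex on the box [xᴸ, xᵁ]. -/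
/-!
Restricted to a segment `t ↦ x + t • v` of the box, the underestimator has second derivative
`D²f(v, v) + 2α ‖v‖²`, the quadratic form of `∇²f + 2αI` at `v`. The Hessian of a `C²` function is
symmetric, so the eigenvalue bound makes `∇²f + 2αI` positive semidefinite
(`hessianMatrix_quadForm_nonneg`), the restriction is convex, and convexity on every segment is
convexity on the box.
-/

/-- The Hessian matrix of `f : ℝⁿ → ℝ` at `x`, with entries the second partial
derivatives, expressed via the second iterated Fréchet derivative. -/
noncomputable def hessianMatrix {n : ℕ} (f : EuclideanSpace ℝ (Fin n) → ℝ)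
    (x : EuclideanSpace ℝ (Fin n)) : Matrix (Fin n) (Fin n) ℝ :=
  Matrix.of fun i j =>
    iteratedFDeriv ℝ 2 f x ![EuclideanSpace.single i 1, EuclideanSpace.single j 1]

lemma hessianMatrix_isHermitian {n : ℕ} {f : EuclideanSpace ℝ (Fin n) → ℝ}
    (hf : ContDiff ℝ 2 f) (x : EuclideanSpace ℝ (Fin n)) : (hessianMatrix f x).IsHermitian := by
  have hs : IsSymmSndFDerivAt ℝ f x := hf.contDiffAt.isSymmSndFDerivAt (by simp)
  ext i j
  simp only [hessianMatrix, Matrix.conjTranspose_apply, Matrix.of_apply, iteratedFDeriv_two_apply]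
  simpa using hs _ _

lemma hessianMatrix_quadForm {n : ℕ} (f : EuclideanSpace ℝ (Fin n) → ℝ)
    (x v : EuclideanSpace ℝ (Fin n)) :
    v.ofLp ⬝ᵥ ((hessianMatrix f x).mulVec v.ofLp) = fderiv ℝ (fderiv ℝ f) x v v := by
  have hv : v = ∑ i, v i • EuclideanSpace.single i (1 : ℝ) := by
    ext j
    simp [Finset.sum_apply, Pi.single_apply]
  conv_rhs => rw [hv]
  simp only [map_sum, map_smul, sum_apply, smul_apply,
    dotProduct, Matrix.mulVec, hessianMatrix, Matrix.of_apply, iteratedFDeriv_two_apply,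
    Finset.mul_sum, smul_eq_mul, Matrix.cons_val_zero, Matrix.cons_val_one]
  rw [Finset.sum_comm]
  refine Finset.sum_congr rfl fun i _ => Finset.sum_congr rfl fun j _ => ?_
  ring

/-- Positive semidefiniteness of `∇²f(x) + 2αI`, expressed through the second Fréchet derivative. -/
lemma hessianMatrix_quadForm_nonneg {n : ℕ} {f : EuclideanSpace ℝ (Fin n) → ℝ}
    (hf : ContDiff ℝ 2 f) {x : EuclideanSpace ℝ (Fin n)} {α : ℝ}
    (h : ∀ μ ∈ spectrum ℝ (hessianMatrix f x), α ≥ -(1 / 2) * μ)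
    (v : EuclideanSpace ℝ (Fin n)) :
    0 ≤ fderiv ℝ (fderiv ℝ f) x v v + α * ∑ i, 2 * (v i * v i) := by
  have hA : (hessianMatrix f x + algebraMap ℝ (Matrix (Fin n) (Fin n) ℝ) (2 * α)).IsHermitian := by
    refine (hessianMatrix_isHermitian hf x).add ?_
    rw [Matrix.algebraMap_eq_diagonal]
    exact Matrix.isHermitian_diagonal _
  have hp := hA.posSemidef_iff_eigenvalues_nonneg.2 fun i => by
    have hm := hA.eigenvalues_mem_spectrum_real i
    have hm' : hA.eigenvalues i - 2 * α ∈ spectrum ℝ (hessianMatrix f x) := by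
      rw [spectrum.mem_iff] at hm ⊢
      convert hm using 2
      rw [map_sub]
      abel
    have := h _ hm'
    simp only [Pi.zero_apply]
    linarith
  have h0 := hp.re_dotProduct_nonneg v.ofLp
  simp only [star_trivial, Matrix.add_mulVec, dotProduct_add, hessianMatrix_quadForm,
    RCLike.re_to_real] at h0
  convert h0 using 2
  simp only [Matrix.algebraMap_eq_diagonal, dotProduct, Matrix.mulVec_diagonal, Finset.mul_sum]
  refine Finset.sum_congr rfl fun i _ => ?_
  simp
  ring

/-- **Convexity of the αBB underestimator (Maranas–Floudas condition, Eq. (10)).**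
Let `f` be twice continuously differentiable and `α ≥ 0` satisfy
`α ≥ -(1/2)·λ_min(∇²f(x))` for every `x` in the box `[xL, xU]` (equivalently,
`α ≥ -(1/2)·μ` for every eigenvalue `μ` of `∇²f(x)` at every `x` in the box).
Then the αBB underestimator `L(x) = f(x) + α ∑ i (xLᵢ - xᵢ)(xUᵢ - xᵢ)` is
convex on the box. -/
theorem abb_convex (n : ℕ) (hn : 1 ≤ n)
    (f : EuclideanSpace ℝ (Fin n) → ℝ) (hf : ContDiff ℝ 2 f)
    (xL xU : EuclideanSpace ℝ (Fin n)) (hbox : ∀ i, xL i ≤ xU i)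
    (α : ℝ) (hα0 : 0 ≤ α)
    (hαeig : ∀ x : EuclideanSpace ℝ (Fin n), (∀ i, xL i ≤ x i ∧ x i ≤ xU i) →
      ∀ μ ∈ spectrum ℝ (hessianMatrix f x), α ≥ -(1 / 2) * μ) :
    ConvexOn ℝ {x : EuclideanSpace ℝ (Fin n) | ∀ i, xL i ≤ x i ∧ x i ≤ xU i}
      (fun x => f x + α * ∑ i, (xL i - x i) * (xU i - x i)) := by
  have hconv : Convex ℝ {x : EuclideanSpace ℝ (Fin n) | ∀ i, xL i ≤ x i ∧ x i ≤ xU i} := by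
    intro x hx y hy a b ha hb hab i
    exact convex_Icc (xL i) (xU i) (hx i) (hy i) ha hb hab
  refine ⟨hconv, fun x hx y hy a b ha hb hab => ?_⟩
  set v := y - x with hv
  have hline : ∀ t : ℝ, HasDerivAt (fun t : ℝ => x + t • v) v t := fun t => by
    simpa using ((hasDerivAt_id t).smul_const v).const_add x
  have hcoord : ∀ (t : ℝ) (i), HasDerivAt (fun t : ℝ => (x + t • v) i) (v i) t := fun t i => by
    simpa using ((hasDerivAt_id t).mul_const (v i)).const_add (x i)
  have hφ : ∀ t : ℝ, HasDerivAt
      (fun t : ℝ => f (x + t • v) +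
        α * ∑ i, (xL i - (x + t • v) i) * (xU i - (x + t • v) i))
      (fderiv ℝ f (x + t • v) v +
        α * ∑ i, (-v i * (xU i - (x + t • v) i) + (xL i - (x + t • v) i) * -v i)) t := fun t => by
    refine HasDerivAt.add ?_ (HasDerivAt.const_mul _ (HasDerivAt.fun_sum fun i _ => ?_))
    · exact ((hf.differentiable (by norm_num)) _).hasFDerivAt.comp_hasDerivAt t (hline t)
    · exact ((hcoord t i).const_sub _).mul ((hcoord t i).const_sub _)
  have hφ' : ∀ t : ℝ, HasDerivAt
      (fun t : ℝ => fderiv ℝ f (x + t • v) v +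
        α * ∑ i, (-v i * (xU i - (x + t • v) i) + (xL i - (x + t • v) i) * -v i))
      (fderiv ℝ (fderiv ℝ f) (x + t • v) v v + α * ∑ i, 2 * (v i * v i)) t := fun t => by
    refine HasDerivAt.add ?_ (HasDerivAt.const_mul _ (HasDerivAt.fun_sum fun i _ => ?_))
    · have hd : Differentiable ℝ (fderiv ℝ f) :=
        (hf.fderiv_right (m := 1) (by norm_num)).differentiable (by norm_num)
      have h1 : HasDerivAt (fun t : ℝ => fderiv ℝ f (x + t • v))
          (fderiv ℝ (fderiv ℝ f) (x + t • v) v) t :=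
        (hd _).hasFDerivAt.comp_hasDerivAt t (hline t)
      simpa using h1.clm_apply (hasDerivAt_const t v)
    · have h2 : 2 * (v i * v i) = -v i * -v i + -v i * -v i := by ring
      rw [h2]
      exact (((hcoord t i).const_sub (xU i)).const_mul (-v i)).add
        (((hcoord t i).const_sub (xL i)).mul_const (-v i))
  have hseg : ∀ t ∈ Set.Icc (0 : ℝ) 1, ∀ i, xL i ≤ (x + t • v) i ∧ (x + t • v) i ≤ xU i :=
    fun t ht => hconv.add_smul_sub_mem hx hy ht
  have hc := convexOn_of_hasDerivWithinAt2_nonneg (convex_Icc (0 : ℝ) 1)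
    (fun t _ => (hφ t).continuousAt.continuousWithinAt)
    (fun t _ => (hφ t).hasDerivWithinAt) (fun t _ => (hφ' t).hasDerivWithinAt)
    (fun t ht => hessianMatrix_quadForm_nonneg hf (hαeig _ (hseg t (interior_subset ht))) v)
  have h := hc.2 (x := 0) (by simp) (y := 1) (by simp) ha hb hab
  have e : a • x + b • y = x + (a • (0 : ℝ) + b • (1 : ℝ)) • v := by
    obtain rfl : a = 1 - b := by linarith
    rw [hv]
    simp only [smul_eq_mul, mul_zero, mul_one, zero_add]
    module
  have e1 : x + (1 : ℝ) • v = y := by simp [hv]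
  have e0 : x + (0 : ℝ) • v = x := by simp
  simp only [← e, e0, e1] at h
  exact h
end

section
/- Let n ≥ 1 and let A, A̲, Ā be n×n real symmetric matrices with A̲ᵢⱼ ≤ Aᵢⱼ ≤ Āᵢⱼ for all entries (i, j). Then λ_min(A) ≥ λ_min(A̲) − ρ(Ā − A̲), where λ_min denotes the smallest eigenvalue and ρ denotes the spectral radius. -/
/-!
Let `μ` be an eigenvalue of `A` with eigenvector `v`. Splitting `A = A̲ + (A - A̲)`, the quadratic
form of `A̲` at `v` is at least `λ_min(A̲) ‖v‖²`, while the entrywise bounds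
`0 ≤ A - A̲ ≤ Ā - A̲` give `-vᵀ(A - A̲)v ≤ |v|ᵀ(Ā - A̲)|v| ≤ ρ(Ā - A̲) ‖v‖²`, where `|v|` is the
vector of absolute values, which has the same Euclidean norm as `v`. Hence
`μ ‖v‖² = vᵀAv ≥ (λ_min(A̲) - ρ(Ā - A̲)) ‖v‖²`. Both estimates rest on the Rayleigh bound
`mul_dotProduct_le_of_spectrum`.
-/

/-- The smallest eigenvalue of a real (symmetric) matrix, as the infimum of its
real spectrum. -/
noncomputable def minEigenvalue {n : ℕ} (A : Matrix (Fin n) (Fin n) ℝ) : ℝ :=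
  sInf (spectrum ℝ A)

/-- The spectral radius of a real (symmetric) matrix: the maximum absolute
value of its real spectrum. -/
noncomputable def spectralRad {n : ℕ} (A : Matrix (Fin n) (Fin n) ℝ) : ℝ :=
  sSup (abs '' spectrum ℝ A)

open Matrix in
/-- Rayleigh bound: a lower bound `c` for the spectrum of a symmetric matrix bounds its quadratic
form from below, because `M - c • 1` is positive semidefinite. -/
theorem mul_dotProduct_le_of_spectrum {n : ℕ} {M : Matrix (Fin n) (Fin n) ℝ} (hM : M.IsSymm)
    {c : ℝ} (hc : ∀ μ ∈ spectrum ℝ M, c ≤ μ) (v : Fin n → ℝ) :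
    c * (v ⬝ᵥ v) ≤ v ⬝ᵥ (M *ᵥ v) := by
  have hH : (M - algebraMap ℝ _ c).IsHermitian := by
    have h1 : M.IsHermitian := by simpa [IsHermitian, IsSymm] using hM
    refine h1.sub ?_
    rw [Algebra.algebraMap_eq_smul_one]
    simp [IsHermitian]
  have hP : (M - algebraMap ℝ _ c).PosSemidef := by
    rw [hH.posSemidef_iff_eigenvalues_nonneg]
    intro i
    have h := hH.eigenvalues_mem_spectrum_real i
    rw [← spectrum.sub_singleton_eq, Set.sub_singleton] at h
    obtain ⟨μ, hμ, h⟩ := h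
    have := hc μ hμ
    simp only [Pi.zero_apply]
    rw [← h]
    simpa using this
  have h := hP.dotProduct_mulVec_nonneg v
  rw [Algebra.algebraMap_eq_smul_one, sub_mulVec, smul_mulVec, one_mulVec, dotProduct_sub,
    dotProduct_smul] at h
  simpa using h

open Matrix in
/-- The quadratic form of a symmetric matrix is at most `ρ(M) ‖v‖²`: the spectrum of `-M` is
bounded below by `-ρ(M)`. -/
theorem dotProduct_mulVec_le_spectralRad {n : ℕ} {M : Matrix (Fin n) (Fin n) ℝ} (hM : M.IsSymm)
    (v : Fin n → ℝ) : v ⬝ᵥ (M *ᵥ v) ≤ spectralRad M * (v ⬝ᵥ v) := by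
  have h := mul_dotProduct_le_of_spectrum (M := -M) hM.neg (c := -spectralRad M) ?_ v
  · rw [neg_mulVec, dotProduct_neg] at h
    linarith
  · intro μ hμ
    rw [← spectrum.neg_eq, Set.mem_neg] at hμ
    have h1 : |-μ| ≤ spectralRad M :=
      le_csSup ((finite_real_spectrum (A := M)).image _).bddAbove ⟨_, hμ, rfl⟩
    linarith [le_abs_self (-μ)]

open Matrix in
/-- Entrywise domination `0 ≤ B ≤ C` bounds the quadratic form of `B` at `v` from below by minus
the quadratic form of `C` at `|v|`. -/
theorem neg_dotProduct_abs_le {n : ℕ} {B C : Matrix (Fin n) (Fin n) ℝ}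
    (hB : ∀ i j, 0 ≤ B i j) (hBC : ∀ i j, B i j ≤ C i j) (v : Fin n → ℝ) :
    -((fun i => |v i|) ⬝ᵥ (C *ᵥ fun i => |v i|)) ≤ v ⬝ᵥ (B *ᵥ v) := by
  simp only [dotProduct, mulVec, Finset.mul_sum, ← Finset.sum_neg_distrib]
  refine Finset.sum_le_sum fun i _ => Finset.sum_le_sum fun j _ => ?_
  have h1 : -(|v i| * |v j|) ≤ v i * v j := by
    rw [← abs_mul]
    exact neg_abs_le _
  have h2 : 0 ≤ |v i| * |v j| := by positivity
  nlinarith [mul_le_mul_of_nonneg_left h1 (hB i j), mul_le_mul_of_nonneg_right (hBC i j) h2]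

open Matrix in
/-- **Mori–Kokame bound for symmetric interval matrices (MK method, Eq. (19)).**
Let `A`, `A̲`, `Ā` be `n×n` real symmetric matrices with entrywise bounds
`A̲ᵢⱼ ≤ Aᵢⱼ ≤ Āᵢⱼ`. Then `λ_min(A) ≥ λ_min(A̲) - ρ(Ā - A̲)`. -/
theorem mori_kokame_min_eigenvalue_bound (n : ℕ) (hn : 0 < n)
    (A Alo Ahi : Matrix (Fin n) (Fin n) ℝ)
    (hA : A.IsSymm) (hAlo : Alo.IsSymm) (hAhi : Ahi.IsSymm)
    (hbounds : ∀ i j, Alo i j ≤ A i j ∧ A i j ≤ Ahi i j) :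
    minEigenvalue Alo - spectralRad (Ahi - Alo) ≤ minEigenvalue A := by
  -- The spectrum of `A` is nonempty because `0 < n`, so its `sInf` is not a junk value.
  have hne : (spectrum ℝ A).Nonempty := by
    have hH : A.IsHermitian := by simpa [IsHermitian, IsSymm] using hA
    exact ⟨_, hH.eigenvalues_mem_spectrum_real ⟨0, hn⟩⟩
  refine le_csInf hne fun μ hμ => ?_
  rw [← Matrix.spectrum_toLin', ← Module.End.hasEigenvalue_iff_mem_spectrum] at hμ
  obtain ⟨v, hv⟩ := hμ.exists_hasEigenvector
  have hAv : A *ᵥ v = μ • v := by simpa using hv.apply_eq_smul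
  have hpos : 0 < v ⬝ᵥ v := by
    simpa using dotProduct_star_self_pos_iff.2 hv.2
  have h1 := mul_dotProduct_le_of_spectrum hAlo (c := minEigenvalue Alo)
    (fun μ hμ => csInf_le (finite_real_spectrum (A := Alo)).bddBelow hμ) v
  have h2 := neg_dotProduct_abs_le (B := A - Alo) (C := Ahi - Alo)
    (fun i j => by simpa using (hbounds i j).1) (fun i j => by simpa using (hbounds i j).2) v
  have h3 := dotProduct_mulVec_le_spectralRad (hAhi.sub hAlo) (fun i => |v i|)
  have h4 : (fun i => |v i|) ⬝ᵥ (fun i => |v i|) = v ⬝ᵥ v := by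
    simp [dotProduct, abs_mul_abs_self]
  have h5 : v ⬝ᵥ (A *ᵥ v) = μ * (v ⬝ᵥ v) := by
    rw [hAv, dotProduct_smul, smul_eq_mul]
  rw [h4] at h3
  rw [sub_mulVec A, dotProduct_sub, h5] at h2
  refine le_of_mul_le_mul_right ?_ hpos
  linarith
end
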